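/- arXiv:2205.09567 — 4 statements merged into one kernel-verified Lean document; each statement's English description precedes it below -/
import Mathlib

section
/- For every real number c ≥ 1, every real ε with 0 < ε ≤ exp(−1), and every natural number n with (n : ℝ) ≥ 2·e·c·log(ε⁻¹), one has c^n / n! ≤ ε. -/
/-!
Comparing `n!` with the term of index `n` in the series of `exp n` gives `(n / e) ^ n ≤ n!`. If
`e * (b * c) ≤ n`, it follows that `c ^ n / n! ≤ b⁻¹ ^ n`, and this geometric decay is below `ε` as
soon as `log ε⁻¹ ≤ n * log b`. When `b * e * c * log ε⁻¹ ≤ n`, the first requirement holds because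
`1 ≤ log ε⁻¹`, and the second because `1 ≤ b * e * c * log b`; the constant `2 * e` is the case
`b = 2`.
-/

open Real

theorem div_exp_one_pow_le_factorial (n : ℕ) : (n / exp 1) ^ n ≤ (n.factorial : ℝ) := by
  rw [div_pow, exp_one_pow]
  exact (div_le_comm₀ (by positivity) (by positivity)).1
    (pow_div_factorial_le_exp n (Nat.cast_nonneg n) n)

theorem pow_le_factorial_of_exp_one_mul_le {x : ℝ} {n : ℕ} (hx : 0 ≤ x) (h : exp 1 * x ≤ n) :
    x ^ n ≤ (n.factorial : ℝ) :=
  calc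
    x ^ n ≤ (n / exp 1) ^ n := by
      gcongr
      exact (le_div_iff₀' (exp_pos 1)).2 h
    _ ≤ n.factorial := div_exp_one_pow_le_factorial n

theorem pow_div_factorial_le_inv_pow {b c : ℝ} {n : ℕ} (hb : 0 < b) (hc : 0 ≤ c)
    (h : exp 1 * (b * c) ≤ n) : c ^ n / n.factorial ≤ b⁻¹ ^ n := by
  have hbc : b ^ n * c ^ n ≤ n.factorial := by
    rw [← mul_pow]
    exact pow_le_factorial_of_exp_one_mul_le (by positivity) h
  rw [inv_pow, div_le_iff₀ (by positivity)]
  exact (le_inv_mul_iff₀ (by positivity)).2 hbc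

theorem inv_pow_le_of_log_inv_le {b ε : ℝ} {n : ℕ} (hb : 0 < b) (hε : 0 < ε)
    (h : log ε⁻¹ ≤ n * log b) : b⁻¹ ^ n ≤ ε := by
  rw [inv_pow]
  exact inv_le_of_inv_le₀ hε (le_pow_of_log_le hb h)

theorem le_log_inv_of_le_exp_neg {a ε : ℝ} (hε : 0 < ε) (h : ε ≤ exp (-a)) : a ≤ log ε⁻¹ := by
  rw [log_inv]
  exact le_neg_of_le_neg ((log_le_iff_le_exp hε).2 h)

theorem pow_div_factorial_le_of_large_degree_general {b c ε : ℝ} {n : ℕ} (hb : 0 < b)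
    (hc : 0 ≤ c) (hbc : 1 ≤ b * exp 1 * c * log b) (hε : 0 < ε) (hε' : ε ≤ exp (-1))
    (hn : b * exp 1 * c * log ε⁻¹ ≤ n) : c ^ n / n.factorial ≤ ε := by
  have hL : 1 ≤ log ε⁻¹ := le_log_inv_of_le_exp_neg hε hε'
  have hlog : 0 ≤ log b := (pos_of_mul_pos_right (one_pos.trans_le hbc) (by positivity)).le
  have hfactorial : exp 1 * (b * c) ≤ n :=
    calc
      exp 1 * (b * c) = b * exp 1 * c * 1 := by ring
      _ ≤ b * exp 1 * c * log ε⁻¹ := by gcongr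
      _ ≤ n := hn
  have hgeometric : log ε⁻¹ ≤ n * log b :=
    calc
      log ε⁻¹ ≤ b * exp 1 * c * log b * log ε⁻¹ := le_mul_of_one_le_left (by linarith) hbc
      _ = b * exp 1 * c * log ε⁻¹ * log b := by ring
      _ ≤ n * log b := by gcongr
  exact (pow_div_factorial_le_inv_pow hb hc hfactorial).trans
    (inv_pow_le_of_log_inv_le hb hε hgeometric)

theorem one_le_two_mul_exp_one_mul_log_two : 1 ≤ 2 * exp 1 * log 2 := by
  have hlog : 1 ≤ 2 * log 2 := by linarith [log_two_gt_d9]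
  calc
    1 ≤ exp 1 * (2 * log 2) := one_le_mul_of_one_le_of_one_le (one_le_exp zero_le_one) hlog
    _ = 2 * exp 1 * log 2 := by ring

theorem pow_div_factorial_le_of_large_degree
    (c : ℝ) (hc : 1 ≤ c) (ε : ℝ) (hε : 0 < ε) (hε' : ε ≤ Real.exp (-1))
    (n : ℕ) (hn : 2 * Real.exp 1 * c * Real.log ε⁻¹ ≤ (n : ℝ)) :
    c ^ n / (Nat.factorial n) ≤ ε := by
  have hbc : 1 ≤ 2 * exp 1 * c * log 2 := by
    rw [mul_right_comm]
    exact one_le_mul_of_one_le_of_one_le one_le_two_mul_exp_one_mul_log_two hc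
  exact pow_div_factorial_le_of_large_degree_general two_pos (by linarith) hbc hε hε' hn
end

section
/- (Markov brothers' inequality.) Let d, k ∈ ℕ and let p ∈ ℝ[X] be a polynomial of degree at most d. Then sup_{x ∈ [−1,1]} |p^{(k)}(x)| ≤ C_M(d,k) · sup_{x ∈ [−1,1]} |p(x)|, where C_M(d,k) = (∏_{j=0}^{k−1} (d² − j²)) / (∏_{j=0}^{k−1} (2j+1)). -/
/-- The Markov constant `C_M(d,k) = d²(d²−1²)⋯(d²−(k−1)²)/(1·3·5⋯(2k−1))`. -/
noncomputable def markovConst (d k : ℕ) : ℝ :=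
  (∏ j ∈ Finset.range k, ((d : ℝ) ^ 2 - (j : ℝ) ^ 2)) /
    (∏ j ∈ Finset.range k, (2 * (j : ℝ) + 1))

/-!
The proof follows Duffin and Schaeffer. Let `T` be the Chebyshev polynomial of degree `n`, and let
`|p| ≤ M` at its extremal nodes on `[-1, 1]`. By Lagrange interpolation at these nodes, the values
`p'(τ)` at the zeros `τ` of `T` satisfy `|p'(τ)| ≤ M |T'(τ)|`, since all terms of the expansion
of `T'(τ)` have the same sign. Interpolating `p'` at the zeros of `T` and shifting a point
`x ∈ [-1, 1]` to the origin, the Taylor coefficients of `p'` are bounded by those of the derivative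
of the polynomial `R` with roots `-|τ - x|`.

On the imaginary axis `|R(iy)|` is `|T(x + iy)|` up to the leading coefficient, and
`|T(x + iy)| ≤ |T(1 + iy)|`. As `T(1 + ·)` has no zero in the closed right half-plane, the
Phragmén–Lindelöf principle and the Gauss–Lucas theorem pass this comparison to all derivatives at
`0`, so `|p^(k)(x)| ≤ M T^(k)(1)`, which is `M` times the Markov constant.

The bound `|T(x + iy)| ≤ |T(1 + iy)|` comes from `2 |T(cos (θ + iη))|² = T(cos 2θ) + T(cosh 2η)`:
the generating function in `n` of the right-hand side satisfies a linear equation which makes its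
coefficients, for fixed `y`, largest at `x = 1`.
-/

open Polynomial Finset

/-- Coefficientwise domination of `A` by `B` for real power series (Cauchy's majorant relation):
each coefficient of `B` bounds the absolute value of the corresponding coefficient of `A`. -/
def Majorized (A B : PowerSeries ℝ) : Prop :=
  ∀ n, |PowerSeries.coeff n A| ≤ PowerSeries.coeff n B

section Majorant

variable {A A' B B' : PowerSeries ℝ}

theorem abs_coeff_mul_le {n : ℕ}
    (hA : ∀ m ≤ n, |PowerSeries.coeff m A| ≤ PowerSeries.coeff m A')
    (hB : ∀ m ≤ n, |PowerSeries.coeff m B| ≤ PowerSeries.coeff m B') :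
    |PowerSeries.coeff n (A * B)| ≤ PowerSeries.coeff n (A' * B') := by
  simp only [PowerSeries.coeff_mul]
  refine (abs_sum_le_sum_abs _ _).trans (sum_le_sum fun ⟨i, j⟩ hij => ?_)
  have hn : i + j = n := mem_antidiagonal.mp hij
  have hi := hA i (by lia)
  rw [abs_mul]
  exact mul_le_mul hi (hB j (by lia)) (abs_nonneg _) ((abs_nonneg _).trans hi)

namespace Majorized

theorem mul (hA : Majorized A A') (hB : Majorized B B') : Majorized (A * B) (A' * B') :=
  fun _ => abs_coeff_mul_le (fun m _ => hA m) (fun m _ => hB m)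

theorem add (hA : Majorized A A') (hB : Majorized B B') : Majorized (A + B) (A' + B') := fun n => by
  simpa only [map_add] using (abs_add_le _ _).trans (add_le_add (hA n) (hB n))

theorem X : Majorized PowerSeries.X PowerSeries.X := fun n => by
  rw [PowerSeries.coeff_X]; split_ifs <;> simp

theorem C {a b : ℝ} (h : |a| ≤ b) : Majorized (PowerSeries.C a) (PowerSeries.C b) := fun n => by
  simp only [PowerSeries.coeff_C]; split_ifs <;> simp [h]

theorem one : Majorized 1 1 := C abs_one.le

theorem prod {ι : Type*} (s : Finset ι) {f g : ι → PowerSeries ℝ}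
    (h : ∀ i ∈ s, Majorized (f i) (g i)) :
    Majorized (∏ i ∈ s, f i) (∏ i ∈ s, g i) := by
  classical
  induction s using Finset.induction_on with
  | empty => exact one
  | insert i s hi ih =>
    rw [prod_insert hi, prod_insert hi]
    exact (h i (mem_insert_self i s)).mul (ih fun j hj => h j (mem_insert_of_mem hj))

theorem of_eq_add_X_mul {S S' : PowerSeries ℝ} (hA : Majorized A A') (hB : Majorized B B')
    (hS : S = A + PowerSeries.X * (B * S)) (hS' : S' = A' + PowerSeries.X * (B' * S')) :
    Majorized S S' := by
  intro n
  induction n using Nat.strong_induction_on with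
  | _ n ih =>
    rw [hS, hS', map_add, map_add]
    refine (abs_add_le _ _).trans (add_le_add (hA n) ?_)
    cases n with
    | zero => simp
    | succ n =>
      rw [PowerSeries.coeff_succ_X_mul, PowerSeries.coeff_succ_X_mul]
      exact abs_coeff_mul_le (fun m _ => hB m) fun m hm => ih m (Nat.lt_succ_of_le hm)

end Majorized

end Majorant

section ChebyshevSeries

/-- The generating function `∑ Uₙ(w) Xⁿ` of the Chebyshev polynomials of the second kind. -/
noncomputable def chebyshevSeriesU (w : ℝ) : PowerSeries ℝ :=
  PowerSeries.mk fun n => (Chebyshev.U ℝ n).eval w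

/-- The generating function `1 + 2 ∑_{n ≥ 1} Tₙ(w) Xⁿ` of the Chebyshev polynomials of the first
kind, in the normalization in which it is `(1 - X²)/(1 - 2wX + X²)`. -/
noncomputable def chebyshevSeriesT (w : ℝ) : PowerSeries ℝ :=
  (1 - PowerSeries.X ^ 2) * chebyshevSeriesU w

theorem chebyshevSeriesU_mul (w : ℝ) :
    chebyshevSeriesU w * (1 - PowerSeries.C (2 * w) * PowerSeries.X + PowerSeries.X ^ 2) = 1 := by
  have hshift : chebyshevSeriesU w *
        (1 - PowerSeries.C (2 * w) * PowerSeries.X + PowerSeries.X ^ 2) =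
      chebyshevSeriesU w - PowerSeries.C (2 * w) * (PowerSeries.X * chebyshevSeriesU w) +
        PowerSeries.X * (PowerSeries.X * chebyshevSeriesU w) := by ring
  rw [hshift]
  ext n
  rw [map_add, map_sub, PowerSeries.coeff_C_mul]
  rcases n with - | - | n
  · simp [chebyshevSeriesU]
  · simp [chebyshevSeriesU, PowerSeries.coeff_succ_X_mul, PowerSeries.coeff_one]
  · simp [chebyshevSeriesU, PowerSeries.coeff_succ_X_mul, PowerSeries.coeff_one,
      Chebyshev.U_add_one ℝ (n + 1)]

theorem coeff_zero_chebyshevSeriesT (w : ℝ) : PowerSeries.coeff 0 (chebyshevSeriesT w) = 1 := by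
  simp [chebyshevSeriesT, chebyshevSeriesU]

theorem coeff_succ_chebyshevSeriesT (w : ℝ) (n : ℕ) :
    PowerSeries.coeff (n + 1) (chebyshevSeriesT w) = 2 * (Chebyshev.T ℝ ↑(n + 1)).eval w := by
  have hshift : chebyshevSeriesT w =
      chebyshevSeriesU w - PowerSeries.X * (PowerSeries.X * chebyshevSeriesU w) := by
    rw [chebyshevSeriesT]; ring
  rw [hshift, map_sub, PowerSeries.coeff_succ_X_mul]
  rcases n with - | n
  · simp [chebyshevSeriesU]
  · have hTU := congrArg (Polynomial.eval w) (Chebyshev.two_mul_T_eq_U_sub_U ℝ n)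
    rw [eval_mul, eval_ofNat, eval_sub] at hTU
    rw [PowerSeries.coeff_succ_X_mul]
    simpa only [chebyshevSeriesU, PowerSeries.coeff_mk] using! hTU.symm

theorem abs_eval_chebyshevU_le (n : ℕ) {c : ℝ} (hc : |c| ≤ 1) :
    |(Chebyshev.U ℝ n).eval c| ≤ (Chebyshev.U ℝ n).eval 1 := by
  have hderiv (w : ℝ) : (derivative (Chebyshev.T ℝ ↑(n + 1))).eval w =
      (n + 1) * (Chebyshev.U ℝ n).eval w := by
    simp [Chebyshev.T_derivative_eq_U]
  have hle := Chebyshev.abs_iterate_derivative_T_real_le ↑(n + 1) 1 hc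
  rw [Function.iterate_one, hderiv, hderiv, abs_mul, abs_of_pos n.cast_add_one_pos] at hle
  exact le_of_mul_le_mul_left hle n.cast_add_one_pos

theorem chebyshevSeriesU_majorized {c : ℝ} (hc : |c| ≤ 1) :
    Majorized (chebyshevSeriesU c) (chebyshevSeriesU 1) := fun n => by
  simpa only [chebyshevSeriesU, PowerSeries.coeff_mk] using abs_eval_chebyshevU_le n hc

theorem chebyshevSeriesT_add_majorized {c : ℝ} (hc : |c| ≤ 1) :
    Majorized (chebyshevSeriesT 1 + chebyshevSeriesT c - 1)
      (chebyshevSeriesT 1 + chebyshevSeriesT 1 - 1) := fun n => by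
  rcases n with - | n
  · simp [coeff_zero_chebyshevSeriesT, -PowerSeries.coeff_zero_eq_constantCoeff]
  · have hT := Chebyshev.abs_eval_T_real_le_one ↑(n + 1) hc
    simp only [map_sub, map_add, coeff_succ_chebyshevSeriesT, Chebyshev.T_eval_one,
      PowerSeries.coeff_one, n.succ_ne_zero, if_false]
    grind

/-- A fixed-point equation for the left-hand side in which only the reciprocals of `p` and `q`
appear otherwise, so that coefficients of such expressions can be compared recursively. -/
theorem fraction_sum_eq {R : Type*} [CommRing R] {x s a b p q a' b' p' q' : R}
    (ha : a' * a = 1) (hb : b' * b = 1) (hp : p' * p = 1) (hq : q' * q = 1)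
    (hadd : a + b = p + q - s * x) (hmul : a * b = p * q - s * x * (1 + x) ^ 2) :
    (1 - x ^ 2) * a' + (1 - x ^ 2) * b' - 1 =
      ((1 - x ^ 2) * p' + (1 - x ^ 2) * q' - 1) + x * (x * (2 * s * (1 + x) * (p' * q'))) +
      x * ((s * (1 + x) ^ 2 * (p' * q')) * ((1 - x ^ 2) * a' + (1 - x ^ 2) * b' - 1)) := by
  have hpq : p' * q' * (p * q) = 1 := by linear_combination q' * q * hp + hq
  have hnum : ((1 - x ^ 2) * a' + (1 - x ^ 2) * b' - 1) * (a * b) =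
      (1 - x ^ 2) * (a + b) - a * b := by
    linear_combination (1 - x ^ 2) * (b * ha + a * hb)
  generalize (1 - x ^ 2) * a' + (1 - x ^ 2) * b' - 1 = S at *
  rw [hadd, hmul] at hnum
  linear_combination -S * hpq + p' * q' * hnum + (1 - x ^ 2) * (p' * hq + q' * hp) - hpq

theorem chebyshevSeriesT_add_eq {u v c s : ℝ} (hadd : u + v = 1 + c + s) (hmul : u * v = c - s) :
    chebyshevSeriesT u + chebyshevSeriesT v - 1 =
      chebyshevSeriesT 1 + chebyshevSeriesT c - 1 +
        PowerSeries.X * (PowerSeries.X * (2 * PowerSeries.C (2 * s) * (1 + PowerSeries.X) *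
          (chebyshevSeriesU 1 * chebyshevSeriesU c))) +
      PowerSeries.X * ((PowerSeries.C (2 * s) * (1 + PowerSeries.X) ^ 2 *
        (chebyshevSeriesU 1 * chebyshevSeriesU c)) *
          (chebyshevSeriesT u + chebyshevSeriesT v - 1)) := by
  have hadd' := congrArg (PowerSeries.C (R := ℝ)) hadd
  have hmul' := congrArg (PowerSeries.C (R := ℝ)) hmul
  refine fraction_sum_eq (chebyshevSeriesU_mul u) (chebyshevSeriesU_mul v)
    (chebyshevSeriesU_mul 1) (chebyshevSeriesU_mul c) ?_ ?_ <;>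
  simp only [map_add, map_mul, map_sub, map_one, map_ofNat] at hadd' hmul' ⊢
  · linear_combination -2 * PowerSeries.X * hadd'
  · linear_combination (-2 * PowerSeries.X - 2 * PowerSeries.X ^ 3) * hadd' +
      4 * PowerSeries.X ^ 2 * hmul'

theorem chebyshevSeriesT_add_majorized_of {u v u' v' c s : ℝ} (hc : |c| ≤ 1) (hs : 0 ≤ s)
    (hadd : u + v = 1 + c + s) (hmul : u * v = c - s)
    (hadd' : u' + v' = 1 + 1 + s) (hmul' : u' * v' = 1 - s) :
    Majorized (chebyshevSeriesT u + chebyshevSeriesT v - 1)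
      (chebyshevSeriesT u' + chebyshevSeriesT v' - 1) := by
  have hU := (chebyshevSeriesU_majorized (c := 1) (by simp)).mul (chebyshevSeriesU_majorized hc)
  have hC : Majorized (PowerSeries.C (2 * s)) (PowerSeries.C (2 * s)) :=
    .C (abs_of_nonneg (by positivity)).le
  have hX := Majorized.one.add .X
  have h2 : Majorized 2 2 := by
    rw [← one_add_one_eq_two]; exact .add .one .one
  refine .of_eq_add_X_mul (.add (chebyshevSeriesT_add_majorized hc) ?_) ?_
    (chebyshevSeriesT_add_eq hadd hmul) (chebyshevSeriesT_add_eq hadd' hmul')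
  · exact .mul .X (.mul .X (.mul (.mul (.mul h2 hC) hX) hU))
  · rw [sq]
    exact .mul (.mul hC (.mul hX hX)) hU

theorem eval_chebyshevT_add_le (n : ℕ) {u v u' v' c s : ℝ} (hc : |c| ≤ 1) (hs : 0 ≤ s)
    (hadd : u + v = 1 + c + s) (hmul : u * v = c - s)
    (hadd' : u' + v' = 1 + 1 + s) (hmul' : u' * v' = 1 - s) :
    (Chebyshev.T ℝ n).eval u + (Chebyshev.T ℝ n).eval v ≤
      (Chebyshev.T ℝ n).eval u' + (Chebyshev.T ℝ n).eval v' := by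
  rcases n with - | n
  · simp
  · have h := (le_abs_self _).trans
      (chebyshevSeriesT_add_majorized_of hc hs hadd hmul hadd' hmul' (n + 1))
    simp only [map_sub, map_add, coeff_succ_chebyshevSeriesT] at h
    linarith

end ChebyshevSeries

section ChebyshevModulus

theorem re_complex_cos (z : ℂ) : (Complex.cos z).re = Real.cos z.re * Real.cosh z.im := by
  rw [Complex.cos_eq]
  simp [← Complex.ofReal_cos, ← Complex.ofReal_cosh, ← Complex.ofReal_sin, ← Complex.ofReal_sinh]

theorem im_complex_cos (z : ℂ) : (Complex.cos z).im = -(Real.sin z.re * Real.sinh z.im) := by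
  rw [Complex.cos_eq]
  simp [← Complex.ofReal_cos, ← Complex.ofReal_cosh, ← Complex.ofReal_sin, ← Complex.ofReal_sinh]

theorem two_mul_sq_norm_cos (z : ℂ) :
    2 * ‖Complex.cos z‖ ^ 2 = Real.cos (2 * z.re) + Real.cosh (2 * z.im) := by
  rw [Complex.sq_norm, Complex.normSq_apply, re_complex_cos, im_complex_cos, Real.cos_two_mul,
    Real.cosh_two_mul]
  linear_combination 2 * Real.sinh z.im ^ 2 * Real.sin_sq_add_cos_sq z.re +
    (2 * Real.cos z.re ^ 2 - 1) * Real.cosh_sq_sub_sinh_sq z.im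

/-- The parameters are `u = cos 2θ` and `v = cosh 2η` for `x + iy = cos (θ + iη)`. -/
theorem exists_two_mul_sq_norm_eval_chebyshevT_eq (x y : ℝ) :
    ∃ u v : ℝ, u + v = 2 * x ^ 2 + 2 * y ^ 2 ∧ u * v = 2 * x ^ 2 - 1 - 2 * y ^ 2 ∧
      ∀ n : ℕ, 2 * ‖(Chebyshev.T ℂ n).eval (x + y * Complex.I : ℂ)‖ ^ 2 =
        (Chebyshev.T ℝ n).eval u + (Chebyshev.T ℝ n).eval v := by
  obtain ⟨w, hw⟩ := Complex.cos_surjective (x + y * Complex.I)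
  refine ⟨Real.cos (2 * w.re), Real.cosh (2 * w.im), ?_, ?_, fun n => ?_⟩
  · rw [← two_mul_sq_norm_cos, hw, Complex.sq_norm, Complex.normSq_add_mul_I]; ring
  · have hre : (2 * (x + y * Complex.I : ℂ) ^ 2 - 1).re = 2 * x ^ 2 - 1 - 2 * y ^ 2 := by
      simp [sq]; ring
    rw [← hre, ← hw, ← Complex.cos_two_mul, re_complex_cos]
    simp
  · rw [← hw, Chebyshev.T_complex_cos, two_mul_sq_norm_cos, Chebyshev.T_real_cos,
      Chebyshev.T_real_cosh]
    simp [mul_left_comm]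

theorem norm_eval_chebyshevT_le (n : ℕ) {x : ℝ} (hx : |x| ≤ 1) (y : ℝ) :
    ‖(Chebyshev.T ℂ n).eval (x + y * Complex.I : ℂ)‖ ≤
      ‖(Chebyshev.T ℂ n).eval (1 + y * Complex.I : ℂ)‖ := by
  obtain ⟨u, v, hadd, hmul, hT⟩ := exists_two_mul_sq_norm_eval_chebyshevT_eq x y
  obtain ⟨u', v', hadd', hmul', hT'⟩ := exists_two_mul_sq_norm_eval_chebyshevT_eq 1 y
  have hx2 := (sq_le_one_iff_abs_le_one x).mpr hx
  have hc : |2 * x ^ 2 - 1| ≤ 1 := abs_le.mpr ⟨by linarith [sq_nonneg x], by linarith⟩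
  have hle := eval_chebyshevT_add_le n hc (by positivity : 0 ≤ 2 * y ^ 2)
    (hadd.trans (by ring)) hmul (hadd'.trans (by ring)) (hmul'.trans (by ring))
  rw [← hT n, ← hT' n, Complex.ofReal_one] at hle
  exact (sq_le_sq₀ (norm_nonneg _) (norm_nonneg _)).mp (by linarith)

end ChebyshevModulus

section HalfPlane

variable {P Q : ℂ[X]}

theorem norm_eval_le_of_le_on_imaginary_axis (hdeg : P.degree ≤ Q.degree)
    (hQ : ∀ z : ℂ, 0 ≤ z.re → Q.eval z ≠ 0)
    (haxis : ∀ y : ℝ, ‖P.eval (y * Complex.I)‖ ≤ ‖Q.eval (y * Complex.I)‖)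
    {z : ℂ} (hz : 0 ≤ z.re) : ‖P.eval z‖ ≤ ‖Q.eval z‖ := by
  have hbdd := Asymptotics.div_isBoundedUnder_of_isBigO (isBigO_cobounded_of_degree_le hdeg)
  have hdiff : DiffContOnCl ℂ (fun w => P.eval w / Q.eval w) {w | 0 < w.re} := by
    refine DifferentiableOn.diffContOnCl ?_
    rw [Complex.closure_setOfPred_lt_re]
    exact P.differentiable.differentiableOn.div Q.differentiable.differentiableOn hQ
  have hquot : ‖P.eval z / Q.eval z‖ ≤ 1 := by
    refine PhragmenLindelof.right_half_plane_of_bounded_on_real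
      (f := fun w => P.eval w / Q.eval w) hdiff ⟨0, two_pos, 0, ?_⟩
      (RCLike.tendsto_ofReal_atTop_cobounded ℂ |>.isBoundedUnder_comp hbdd) (fun y => ?_) hz
    · simpa using (Asymptotics.isBigO_one_iff ℝ).mpr (hbdd.mono inf_le_left)
    · rw [norm_div]
      exact div_le_one_of_le₀ (haxis y) (norm_nonneg _)
  rwa [norm_div, div_le_one (norm_pos_iff.mpr (hQ z hz))] at hquot

theorem eval_derivative_ne_zero_of_re_nonneg (hdeg : 0 < P.degree)
    (hP : ∀ z : ℂ, 0 ≤ z.re → P.eval z ≠ 0) (z : ℂ) (hz : 0 ≤ z.re) :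
    P.derivative.eval z ≠ 0 := by
  intro hroot
  have hmem : z ∈ P.derivative.rootSet ℂ :=
    mem_rootSet.mpr ⟨derivative_ne_zero.mpr (natDegree_pos_iff_degree_pos.mpr hdeg).ne',
      by simpa using hroot⟩
  have hsub : P.rootSet ℂ ⊆ {w | w.re < 0} := fun w hw =>
    not_le.mp fun hre => hP w hre (by simpa using (mem_rootSet.mp hw).2)
  exact hz.not_gt (convexHull_min hsub (convex_halfSpace_re_lt 0)
    (rootSet_derivative_subset_convexHull_rootSet hdeg hmem))

theorem eval_iterate_derivative_ne_zero_of_re_nonneg {k : ℕ} (hk : k ≤ P.natDegree)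
    (hP : ∀ z : ℂ, 0 ≤ z.re → P.eval z ≠ 0) (z : ℂ) (hz : 0 ≤ z.re) :
    (derivative^[k] P).eval z ≠ 0 := by
  induction k generalizing P with
  | zero => exact hP z hz
  | succ k ih =>
    rw [Function.iterate_succ_apply]
    refine ih ?_ (eval_derivative_ne_zero_of_re_nonneg
      (natDegree_pos_iff_degree_pos.mp (by lia)) hP)
    rw [natDegree_derivative]
    lia

/-- If the `k`-th derivative of `P` were the larger one at `z`, then `Q - λ P` would have a
vanishing `k`-th derivative at `z` for some `‖λ‖ < 1`, against the Gauss–Lucas theorem. -/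
theorem norm_eval_iterate_derivative_le_of_le_on_imaginary_axis (hP : P.Monic) (hQ : Q.Monic)
    (hdeg : P.degree = Q.degree) (hne : ∀ z : ℂ, 0 ≤ z.re → Q.eval z ≠ 0)
    (haxis : ∀ y : ℝ, ‖P.eval (y * Complex.I)‖ ≤ ‖Q.eval (y * Complex.I)‖)
    (k : ℕ) {z : ℂ} (hz : 0 ≤ z.re) :
    ‖(derivative^[k] P).eval z‖ ≤ ‖(derivative^[k] Q).eval z‖ := by
  have hnat := natDegree_eq_natDegree hdeg
  rcases lt_or_ge Q.natDegree k with hk | hk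
  · rw [iterate_derivative_eq_zero (hnat ▸ hk), iterate_derivative_eq_zero hk]
  by_contra! hlt
  have hpos := (norm_nonneg _).trans_lt hlt
  set c : ℂ := (derivative^[k] Q).eval z / (derivative^[k] P).eval z with hc
  have hc1 : ‖c‖ < 1 := by rwa [hc, norm_div, div_lt_one hpos]
  have hlead : (Q - C c * P).coeff Q.natDegree ≠ 0 := by
    rw [coeff_sub, coeff_C_mul, hQ.coeff_natDegree, ← hnat, hP.coeff_natDegree, mul_one,
      sub_ne_zero]
    intro h
    simp [← h] at hc1
  refine eval_iterate_derivative_ne_zero_of_re_nonneg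
    (hk.trans (le_natDegree_of_ne_zero hlead)) (fun w hw hroot => ?_) z hz ?_
  · have heq : Q.eval w = c * P.eval w := by simpa [sub_eq_zero] using hroot
    have hlt : ‖c‖ * ‖Q.eval w‖ < ‖Q.eval w‖ :=
      mul_lt_of_lt_one_left (norm_pos_iff.mpr (hne w hw)) hc1
    refine hlt.not_ge ?_
    calc ‖Q.eval w‖ = ‖c‖ * ‖P.eval w‖ := by rw [heq, norm_mul]
      _ ≤ ‖c‖ * ‖Q.eval w‖ := by
        gcongr
        exact norm_eval_le_of_le_on_imaginary_axis hdeg.le hne haxis hw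
  · rw [iterate_derivative_sub, iterate_derivative_C_mul, eval_sub, eval_C_mul, hc,
      div_mul_cancel₀ _ (norm_pos_iff.mp hpos), sub_self]

end HalfPlane

section Interpolation

variable {ι F : Type*} [Field F] {s : Finset ι}

theorem eq_C_leadingCoeff_mul_nodal {v : ι → F} (hv : Set.InjOn v s) {f : F[X]}
    (hf : f.degree = #s) (h0 : ∀ i ∈ s, f.eval (v i) = 0) :
    f = C f.leadingCoeff * Lagrange.nodal s v := by
  have hlc : f.leadingCoeff ≠ 0 := by
    rw [leadingCoeff_ne_zero]
    rintro rfl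
    simp at hf
  have hdeg : f.degree = (C f.leadingCoeff * Lagrange.nodal s v).degree := by
    rw [degree_C_mul hlc, Lagrange.degree_nodal, hf]
  refine eq_of_degree_le_of_eval_index_eq s hv hf.le hdeg
    (by rw [leadingCoeff_mul_monic Lagrange.nodal_monic, leadingCoeff_C]) fun i hi => ?_
  rw [h0 i hi, eval_C_mul, Lagrange.eval_nodal_at_node hi, mul_zero]

variable [DecidableEq ι]

theorem eq_sum_eval_div_eval_derivative_nodal {v : ι → F} (hv : Set.InjOn v s) {P : F[X]}
    (hP : P.degree < #s) :
    P = ∑ i ∈ s, C (P.eval (v i) / (derivative (Lagrange.nodal s v)).eval (v i)) *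
      Lagrange.nodal (s.erase i) v := by
  conv_lhs => rw [Lagrange.eq_interpolate hv hP, Lagrange.interpolate_eq_sum]
  refine sum_congr rfl fun i hi => ?_
  rw [Lagrange.eval_nodal_derivative_eval_node_eq hi, Lagrange.eval_nodal, Lagrange.nodal]

theorem abs_apply_le_of_forall_mul_nonneg {v : ι → ℝ} (hv : Set.InjOn v s) {P Q : ℝ[X]}
    (hP : P.degree < #s) (hQ : Q.degree < #s) {M c : ℝ} (hc : c ≠ 0) (L : ℝ[X] →ₗ[ℝ] ℝ)
    (hle : ∀ i ∈ s, |P.eval (v i)| ≤ M * |Q.eval (v i)|)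
    (hsign : ∀ i ∈ s, 0 ≤ c * (Q.eval (v i) / (derivative (Lagrange.nodal s v)).eval (v i) *
      L (Lagrange.nodal (s.erase i) v))) :
    |L P| ≤ M * |L Q| := by
  have hL {R : ℝ[X]} (hR : R.degree < #s) : L R =
      ∑ i ∈ s, R.eval (v i) / (derivative (Lagrange.nodal s v)).eval (v i) *
        L (Lagrange.nodal (s.erase i) v) := by
    conv_lhs => rw [eq_sum_eval_div_eval_derivative_nodal hv hR]
    simp only [C_mul', map_sum, map_smul, smul_eq_mul]
  have hQabs : |L Q| =
      ∑ i ∈ s, |Q.eval (v i) / (derivative (Lagrange.nodal s v)).eval (v i) *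
        L (Lagrange.nodal (s.erase i) v)| := by
    refine mul_left_cancel₀ (abs_ne_zero.mpr hc) ?_
    rw [hL hQ, ← abs_mul, mul_sum, abs_sum_of_nonneg hsign, mul_sum]
    refine sum_congr rfl fun i hi => ?_
    rw [← abs_mul, abs_of_nonneg (hsign i hi)]
  rw [hQabs, hL hP, mul_sum]
  refine (abs_sum_le_sum_abs _ _).trans (sum_le_sum fun i hi => ?_)
  rw [abs_mul, abs_mul, abs_div, abs_div, ← mul_assoc, ← mul_div_assoc]
  gcongr
  exact hle i hi

end Interpolation

section DuffinSchaeffer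

theorem eval_iterate_derivative_eq_coeff_taylor {R : Type*} [CommSemiring R] (p : R[X]) (k : ℕ)
    (x : R) : (derivative^[k] p).eval x = k.factorial * (taylor x p).coeff k := by
  rw [taylor_coeff, ← factorial_smul_hasseDeriv, LinearMap.smul_apply, eval_smul, nsmul_eq_mul]

theorem eval_zero_iterate_derivative_taylor {R : Type*} [CommSemiring R] (p : R[X]) (k : ℕ)
    (x : R) : (derivative^[k] (taylor x p)).eval 0 = (derivative^[k] p).eval x := by
  rw [eval_iterate_derivative_eq_coeff_taylor, eval_iterate_derivative_eq_coeff_taylor,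
    taylor_zero]

variable {ι : Type*}

theorem taylor_nodal {R : Type*} [CommRing R] (s : Finset ι) (v : ι → R) (x : R) :
    taylor x (Lagrange.nodal s v) = Lagrange.nodal s fun i => v i - x := by
  rw [taylor_apply, Lagrange.nodal, Polynomial.prod_comp]
  refine prod_congr rfl fun i _ => ?_
  rw [sub_comp, X_comp, C_comp, C_sub]
  ring

theorem map_nodal {R S : Type*} [CommRing R] [CommRing S] (f : R →+* S) (s : Finset ι) (v : ι → R) :
    (Lagrange.nodal s v).map f = Lagrange.nodal s fun i => f (v i) := by
  simp [Lagrange.nodal, Polynomial.map_prod]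

theorem nodal_majorized (s : Finset ι) {v w : ι → ℝ} (h : ∀ i ∈ s, |v i| ≤ w i) :
    Majorized (Lagrange.nodal s v : ℝ[X]) (Lagrange.nodal s (-w) : ℝ[X]) := by
  have hcoe (u : ι → ℝ) : (Lagrange.nodal s u : PowerSeries ℝ) =
      ∏ i ∈ s, (PowerSeries.X + PowerSeries.C (-u i)) := by
    rw [← coeToPowerSeries.ringHom_apply, Lagrange.nodal, map_prod]
    simp [sub_eq_add_neg]
  rw [hcoe, hcoe]
  exact .prod s fun i hi => .add .X (.C (by simpa using h i hi))

theorem abs_eval_iterate_derivative_nodal_le (s : Finset ι) (v : ι → ℝ) (k : ℕ) (x : ℝ) :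
    |(derivative^[k] (Lagrange.nodal s v)).eval x| ≤
      (derivative^[k] (Lagrange.nodal s fun i => -|v i - x|)).eval 0 := by
  rw [eval_iterate_derivative_eq_coeff_taylor, eval_iterate_derivative_eq_coeff_taylor,
    taylor_zero, taylor_nodal, abs_mul, Nat.abs_cast]
  gcongr
  simpa using! nodal_majorized s (fun i _ => le_rfl) k

theorem norm_eval_iterate_derivative_nodal_ofReal (s : Finset ι) (v : ι → ℝ) (k : ℕ) (x : ℝ) :
    ‖(derivative^[k] (Lagrange.nodal s fun i => (v i : ℂ))).eval (x : ℂ)‖ =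
      |(derivative^[k] (Lagrange.nodal s v)).eval x| := by
  have hmap := eval_map_apply (f := Complex.ofRealHom) (p := derivative^[k] (Lagrange.nodal s v)) x
  rw [← iterate_derivative_map, map_nodal] at hmap
  exact (congrArg norm hmap).trans (RCLike.norm_ofReal _)

theorem norm_mul_I_sub_neg_abs (t x y : ℝ) :
    ‖(y * Complex.I - (-|t - x| : ℝ) : ℂ)‖ = ‖(x + y * Complex.I - t : ℂ)‖ := by
  have hl : (y * Complex.I - (-|t - x| : ℝ) : ℂ) = (|t - x| : ℝ) + y * Complex.I := by
    push_cast; ring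
  have hr : (x + y * Complex.I - t : ℂ) = (x - t : ℝ) + y * Complex.I := by
    push_cast; ring
  rw [hl, hr, Complex.norm_add_mul_I, Complex.norm_add_mul_I, sq_abs, sub_sq_comm]

theorem abs_eval_iterate_derivative_nodal_neg_abs_le {s : Finset ι} {v : ι → ℝ} {b : ℝ}
    (hb : ∀ i ∈ s, v i < b) {x : ℝ}
    (hnorm : ∀ y : ℝ, ‖(Lagrange.nodal s fun i => (v i : ℂ)).eval (x + y * Complex.I : ℂ)‖ ≤
      ‖(Lagrange.nodal s fun i => (v i : ℂ)).eval (b + y * Complex.I : ℂ)‖) (k : ℕ) :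
    |(derivative^[k] (Lagrange.nodal s fun i => -|v i - x|)).eval 0| ≤
      |(derivative^[k] (Lagrange.nodal s v)).eval b| := by
  rw [← eval_zero_iterate_derivative_taylor _ k b, taylor_nodal,
    ← norm_eval_iterate_derivative_nodal_ofReal, ← norm_eval_iterate_derivative_nodal_ofReal]
  refine norm_eval_iterate_derivative_le_of_le_on_imaginary_axis Lagrange.nodal_monic
    Lagrange.nodal_monic (by simp only [Lagrange.degree_nodal]) (fun z hz hroot => ?_)
    (fun y => ?_) k Complex.zero_re.ge
  · rw [Lagrange.eval_nodal, prod_eq_zero_iff] at hroot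
    obtain ⟨i, hi, hzi⟩ := hroot
    have hre := congrArg Complex.re (sub_eq_zero.mp hzi)
    rw [Complex.ofReal_re] at hre
    linarith [hb i hi]
  · simp only [Lagrange.eval_nodal, norm_prod] at hnorm ⊢
    convert! hnorm y using 2 with i _ i _
    · exact norm_mul_I_sub_neg_abs _ _ _
    · push_cast; ring_nf

theorem duffin_schaeffer {s : Finset ι} {v : ι → ℝ} (hv : Set.InjOn v s) {P : ℝ[X]}
    (hP : P.degree < #s) {a b x : ℝ} (ha : 0 ≤ a)
    (hbound : ∀ i ∈ s, |P.eval (v i)| ≤ a * |(derivative (Lagrange.nodal s v)).eval (v i)|)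
    (hb : ∀ i ∈ s, v i < b)
    (hnorm : ∀ y : ℝ, ‖(Lagrange.nodal s fun i => (v i : ℂ)).eval (x + y * Complex.I : ℂ)‖ ≤
      ‖(Lagrange.nodal s fun i => (v i : ℂ)).eval (b + y * Complex.I : ℂ)‖) (k : ℕ) :
    |(derivative^[k] P).eval x| ≤ a * |(derivative^[k + 1] (Lagrange.nodal s v)).eval b| := by
  classical
  set q : ι → ℝ := fun i => P.eval (v i) / (derivative (Lagrange.nodal s v)).eval (v i) with hq
  have hqa (i) (hi : i ∈ s) : |q i| ≤ a := by
    rw [hq, abs_div]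
    exact div_le_of_le_mul₀ (abs_nonneg _) ha (hbound i hi)
  calc |(derivative^[k] P).eval x|
      = |∑ i ∈ s, q i * (derivative^[k] (Lagrange.nodal (s.erase i) v)).eval x| := by
        conv_lhs => rw [eq_sum_eval_div_eval_derivative_nodal hv hP]
        simp [iterate_derivative_sum, eval_finsetSum, q]
    _ ≤ ∑ i ∈ s, a * (derivative^[k] (Lagrange.nodal (s.erase i) fun i => -|v i - x|)).eval 0 := by
        refine (abs_sum_le_sum_abs _ _).trans (sum_le_sum fun i hi => ?_)
        rw [abs_mul]
        exact mul_le_mul (hqa i hi) (abs_eval_iterate_derivative_nodal_le _ _ _ _)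
          (abs_nonneg _) ha
    _ = a * (derivative^[k + 1] (Lagrange.nodal s fun i => -|v i - x|)).eval 0 := by
        rw [Function.iterate_succ_apply, Lagrange.derivative_nodal, iterate_derivative_sum,
          eval_finsetSum, mul_sum]
    _ ≤ a * |(derivative^[k + 1] (Lagrange.nodal s v)).eval b| := by
        gcongr
        exact (le_abs_self _).trans (abs_eval_iterate_derivative_nodal_neg_abs_le hb hnorm _)

end DuffinSchaeffer

section ChebyshevZeros

theorem derivative_X_sq_sub_one_mul_derivative_T {R : Type*} [CommRing R] (n : ℤ) :
    derivative ((X ^ 2 - 1) * derivative (Chebyshev.T R n)) =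
      (n : R[X]) ^ 2 * Chebyshev.T R n + X * derivative (Chebyshev.T R n) := by
  have h := Chebyshev.one_sub_X_sq_mul_derivative_derivative_T_eq_poly_in_T (R := R) n
  rw [Function.iterate_succ_apply, Function.iterate_one] at h
  rw [derivative_mul, derivative_sub, derivative_X_sq, derivative_one, C_ofNat]
  linear_combination -h

variable {n : ℕ}

theorem eval_node_X_sq_sub_one_mul_derivative_T (hn : n ≠ 0) (i : ℕ) :
    ((X ^ 2 - 1) * derivative (Chebyshev.T ℝ n)).eval (Chebyshev.node n i) = 0 := by
  have hU := Chebyshev.U_real_cos (i * Real.pi / n) (n - 1)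
  have hnode : ((n - 1 : ℤ) + 1 : ℝ) * (i * Real.pi / n) = i * Real.pi := by
    push_cast; field_simp; ring
  rw [hnode, Real.sin_nat_mul_pi] at hU
  rw [Chebyshev.T_derivative_eq_U, Chebyshev.node]
  simp only [eval_mul, eval_sub, eval_pow, eval_X, eval_one, eval_intCast]
  linear_combination -n * Real.sin (i * Real.pi / n) * hU +
    n * eval (Real.cos (i * Real.pi / n)) (Chebyshev.U ℝ (n - 1)) *
      Real.sin_sq_add_cos_sq (i * Real.pi / n)

theorem X_sq_sub_one_mul_derivative_T_eq_nodal (hn : n ≠ 0) :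
    (X ^ 2 - 1) * derivative (Chebyshev.T ℝ n) =
      C ((X ^ 2 - 1) * derivative (Chebyshev.T ℝ n)).leadingCoeff *
        Lagrange.nodal (range (n + 1)) (Chebyshev.node n) := by
  refine eq_C_leadingCoeff_mul_nodal (Chebyshev.strictAntiOn_node n).injOn ?_
    fun i _ => eval_node_X_sq_sub_one_mul_derivative_T hn i
  have h2 : (X ^ 2 - 1 : ℝ[X]).degree = 2 := degree_X_pow_sub_C two_pos 1
  have hT : (derivative (Chebyshev.T ℝ n)).degree = (n - 1 : ℕ) := by
    rw [degree_derivative, Chebyshev.natDegree_T, Int.natAbs_natCast]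
    simpa
  rw [degree_mul, h2, hT, card_range]
  norm_cast
  lia

variable {τ : ℝ}

theorem abs_lt_one_of_eval_T_eq_zero (hτ : (Chebyshev.T ℝ n).eval τ = 0) : |τ| < 1 := by
  by_contra! h
  have hle := Chebyshev.one_le_abs_eval_T_real n h
  rw [hτ, abs_zero] at hle
  exact zero_lt_one.not_ge hle

theorem eval_derivative_T_ne_zero_of_eval_T_eq_zero (hn : n ≠ 0)
    (hτ : (Chebyshev.T ℝ n).eval τ = 0) : (derivative (Chebyshev.T ℝ n)).eval τ ≠ 0 := by
  intro hderiv
  obtain ⟨hneg, hpos⟩ := abs_lt.mp (abs_lt_one_of_eval_T_eq_zero hτ)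
  rw [← Real.cos_arccos hneg.le hpos.le] at hτ hderiv
  have hU := Chebyshev.U_real_cos (Real.arccos τ) (n - 1)
  rw [Chebyshev.T_derivative_eq_U, eval_mul, eval_intCast] at hderiv
  rw [(mul_eq_zero.mp hderiv).resolve_left (mod_cast hn), zero_mul] at hU
  rw [Chebyshev.T_real_cos] at hτ
  have hsq := Real.sin_sq_add_cos_sq (n * Real.arccos τ)
  push_cast at hU hτ
  rw [sub_add_cancel] at hU
  rw [← hU, hτ] at hsq
  norm_num at hsq

theorem eval_derivative_nodal_erase_node_eq (hn : n ≠ 0) (hτ : (Chebyshev.T ℝ n).eval τ = 0)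
    {i : ℕ} (hi : i ∈ range (n + 1)) :
    ((X ^ 2 - 1) * derivative (Chebyshev.T ℝ n)).leadingCoeff * (τ - Chebyshev.node n i) ^ 2 *
        (derivative (Lagrange.nodal ((range (n + 1)).erase i) (Chebyshev.node n))).eval τ =
      (derivative (Chebyshev.T ℝ n)).eval τ * (1 - τ * Chebyshev.node n i) := by
  have hfac := X_sq_sub_one_mul_derivative_T_eq_nodal hn
  have hderiv := derivative_X_sq_sub_one_mul_derivative_T (R := ℝ) n
  generalize ((X ^ 2 - 1) * derivative (Chebyshev.T ℝ n)).leadingCoeff = κ at *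
  rw [Lagrange.nodal_eq_mul_nodal_erase hi] at hfac
  rw [hfac] at hderiv
  have hfacτ := congrArg (eval τ) hfac
  have hderivτ := congrArg (eval τ) hderiv
  simp only [eval_mul, eval_sub, eval_pow, eval_X, eval_one, eval_C, derivative_mul, derivative_C,
    derivative_sub, derivative_X, eval_zero, eval_add, eval_intCast, hτ] at hfacτ hderivτ
  linear_combination (τ - Chebyshev.node n i) * hderivτ + hfacτ

theorem leadingCoeff_mul_eval_derivative_nodal_erase_node_nonneg (hn : n ≠ 0)
    (hτ : (Chebyshev.T ℝ n).eval τ = 0) {i : ℕ} (hi : i ∈ range (n + 1)) :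
    0 ≤ (derivative (Chebyshev.T ℝ n)).eval τ *
      ((X ^ 2 - 1) * derivative (Chebyshev.T ℝ n)).leadingCoeff *
        (derivative (Lagrange.nodal ((range (n + 1)).erase i) (Chebyshev.node n))).eval τ := by
  have hkey := eval_derivative_nodal_erase_node_eq hn hτ hi
  have hlt := abs_lt_one_of_eval_T_eq_zero hτ
  have hnode : |Chebyshev.node n i| ≤ 1 := abs_le.mpr Chebyshev.node_mem_Icc
  have hmul : τ * Chebyshev.node n i < 1 := (le_abs_self _).trans_lt <| by
    rw [abs_mul]
    exact mul_lt_one_of_nonneg_of_lt_one_left (abs_nonneg _) hlt hnode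
  have hne : τ ≠ Chebyshev.node n i := by
    rintro rfl
    rw [Chebyshev.eval_T_real_node (mem_Iic.mpr (mem_range_succ_iff.mp hi))] at hτ
    exact pow_ne_zero i (neg_ne_zero.mpr one_ne_zero) hτ
  refine nonneg_of_mul_nonneg_left ?_ (pow_pos (abs_pos.mpr (sub_ne_zero.mpr hne)) 2)
  rw [sq_abs, mul_right_comm, mul_assoc _ _ ((τ - _) ^ 2), mul_assoc, hkey, ← mul_assoc]
  exact mul_nonneg (mul_self_nonneg _) (sub_nonneg.mpr hmul.le)

theorem eval_T_node_div_eval_derivative_nodal_pos {i : ℕ} (hi : i ∈ range (n + 1)) :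
    0 < (Chebyshev.T ℝ n).eval (Chebyshev.node n i) /
      (derivative (Lagrange.nodal (range (n + 1)) (Chebyshev.node n))).eval
        (Chebyshev.node n i) := by
  have hi' := mem_range_succ_iff.mp hi
  rw [Lagrange.eval_nodal_derivative_eval_node_eq hi, Lagrange.eval_nodal,
    Chebyshev.eval_T_real_node (mem_Iic.mpr hi')]
  exact div_pos_iff.mpr (mul_pos_iff.mp (Chebyshev.zero_lt_prod_node_sub_node hi'))

theorem abs_eval_derivative_le_of_eval_T_eq_zero (hn : n ≠ 0)
    (hτ : (Chebyshev.T ℝ n).eval τ = 0) {p : ℝ[X]} (hp : p.natDegree ≤ n) {M : ℝ}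
    (hM : ∀ i ≤ n, |p.eval (Chebyshev.node n i)| ≤ M) :
    |(derivative p).eval τ| ≤ M * |(derivative (Chebyshev.T ℝ n)).eval τ| := by
  have hT' := eval_derivative_T_ne_zero_of_eval_T_eq_zero hn hτ
  have hΩ : (X ^ 2 - 1) * derivative (Chebyshev.T ℝ n) ≠ 0 := by
    refine mul_ne_zero (X_pow_sub_C_ne_zero two_pos 1) fun h => hT' ?_
    rw [h, eval_zero]
  have hdeg {q : ℝ[X]} (hq : q.natDegree ≤ n) : q.degree < #(range (n + 1)) := by
    rw [card_range]
    exact (degree_le_of_natDegree_le hq).trans_lt (mod_cast n.lt_succ_self)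
  refine abs_apply_le_of_forall_mul_nonneg (Chebyshev.strictAntiOn_node n).injOn
    (hdeg hp) (hdeg (by simp)) (mul_ne_zero hT' (leadingCoeff_ne_zero.mpr hΩ))
    (leval τ ∘ₗ derivative) (fun i hi => ?_) fun i hi => ?_
  · have hi' := mem_range_succ_iff.mp hi
    simpa [Chebyshev.eval_T_real_node (mem_Iic.mpr hi')] using hM i hi'
  · rw [mul_left_comm]
    exact mul_nonneg (eval_T_node_div_eval_derivative_nodal_pos hi).le
      (leadingCoeff_mul_eval_derivative_nodal_erase_node_nonneg hn hτ hi)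

end ChebyshevZeros

section Markov

theorem card_roots_toFinset_T (n : ℕ) : #(Chebyshev.T ℝ n).roots.toFinset = n := by
  rw [Chebyshev.roots_T_real, Finset.val_toFinset,
    card_image_of_injOn ((range n).nodup_map_iff_injOn.mp (Chebyshev.roots_T_real_nodup n)),
    card_range]

variable {n : ℕ}

theorem eval_T_eq_zero_of_mem_roots_toFinset {τ : ℝ}
    (hτ : τ ∈ (Chebyshev.T ℝ n).roots.toFinset) : (Chebyshev.T ℝ n).eval τ = 0 :=
  isRoot_of_mem_roots (Multiset.mem_toFinset.mp hτ)

theorem T_eq_C_leadingCoeff_mul_nodal (n : ℕ) :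
    Chebyshev.T ℝ n =
      C (Chebyshev.T ℝ n).leadingCoeff * Lagrange.nodal (Chebyshev.T ℝ n).roots.toFinset id := by
  refine eq_C_leadingCoeff_mul_nodal Function.injective_id.injOn ?_
    fun τ hτ => eval_T_eq_zero_of_mem_roots_toFinset hτ
  rw [card_roots_toFinset_T, Chebyshev.degree_T, Int.natAbs_natCast]

theorem norm_eval_nodal_roots_T_le (n : ℕ) {x : ℝ} (hx : |x| ≤ 1) (y : ℝ) :
    ‖(Lagrange.nodal (Chebyshev.T ℝ n).roots.toFinset fun τ => (τ : ℂ)).eval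
        (x + y * Complex.I : ℂ)‖ ≤
      ‖(Lagrange.nodal (Chebyshev.T ℝ n).roots.toFinset fun τ => (τ : ℂ)).eval
        (1 + y * Complex.I : ℂ)‖ := by
  have hmap := congrArg (Polynomial.map Complex.ofRealHom) (T_eq_C_leadingCoeff_mul_nodal n)
  rw [Chebyshev.map_T, Polynomial.map_mul, map_C, map_nodal] at hmap
  have hle := norm_eval_chebyshevT_le n hx y
  rw [hmap, eval_C_mul, eval_C_mul, norm_mul, norm_mul] at hle
  exact le_of_mul_le_mul_left hle (by simp)

theorem abs_eval_iterate_derivative_le_of_node {p : ℝ[X]} (hp : p.natDegree ≤ n) {M : ℝ}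
    (hM : ∀ i ≤ n, |p.eval (Chebyshev.node n i)| ≤ M) (k : ℕ) {x : ℝ} (hx : |x| ≤ 1) :
    |(derivative^[k + 1] p).eval x| ≤ M * |(derivative^[k + 1] (Chebyshev.T ℝ n)).eval 1| := by
  have hM0 : 0 ≤ M := (abs_nonneg _).trans (hM 0 n.zero_le)
  have hT := T_eq_C_leadingCoeff_mul_nodal n
  have hlc (j : ℕ) (y : ℝ) : M * |(derivative^[j] (Chebyshev.T ℝ n)).eval y| =
      M * |(Chebyshev.T ℝ n).leadingCoeff| * |(derivative^[j]
        (Lagrange.nodal (Chebyshev.T ℝ n).roots.toFinset id)).eval y| := by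
    conv_lhs => rw [hT, iterate_derivative_C_mul, eval_C_mul, abs_mul, ← mul_assoc]
  rw [hlc, Function.iterate_succ_apply]
  refine duffin_schaeffer Function.injective_id.injOn ?_ (by positivity) (fun τ hτ => ?_)
    (fun τ hτ => ?_) (by simpa using norm_eval_nodal_roots_T_le n hx) k
  · rw [card_roots_toFinset_T]
    rcases eq_or_ne p 0 with rfl | hp0
    · simp
    · exact (degree_derivative_lt hp0).trans_le (degree_le_of_natDegree_le hp)
  · have hn : n ≠ 0 := by
      rintro rfl
      simp at hτ
    rw [← Function.iterate_one derivative, ← hlc]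
    exact abs_eval_derivative_le_of_eval_T_eq_zero hn
      (eval_T_eq_zero_of_mem_roots_toFinset hτ) hp hM
  · exact (abs_lt.mp (abs_lt_one_of_eval_T_eq_zero (eval_T_eq_zero_of_mem_roots_toFinset hτ))).2

theorem markovConst_eq_eval_iterate_derivative_T (d k : ℕ) :
    markovConst d k = (derivative^[k] (Chebyshev.T ℝ d)).eval 1 := by
  rw [Chebyshev.iterate_derivative_T_eval_one_eq_div (𝔽 := ℝ) d k, markovConst]
  push_cast
  simp

end Markov

/-- Markov brothers' inequality on `[-1,1]`. -/
theorem markov_brothers_inequality (d k : ℕ) (p : Polynomial ℝ) (hp : p.natDegree ≤ d) :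
    sSup ((fun x => |(Polynomial.derivative^[k] p).eval x|) '' Set.Icc (-1 : ℝ) 1) ≤
      markovConst d k * sSup ((fun x => |p.eval x|) '' Set.Icc (-1 : ℝ) 1) := by
  set M := sSup ((fun x => |p.eval x|) '' Set.Icc (-1 : ℝ) 1)
  have hM (x : ℝ) (hx : x ∈ Set.Icc (-1 : ℝ) 1) : |p.eval x| ≤ M :=
    le_csSup (isCompact_Icc.bddAbove_image p.continuous.abs.continuousOn)
      (Set.mem_image_of_mem _ hx)
  refine csSup_le ((Set.nonempty_Icc.mpr (by norm_num)).image _) ?_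
  rintro _ ⟨x, hx, rfl⟩
  have hT : 0 ≤ (derivative^[k] (Chebyshev.T ℝ d)).eval 1 :=
    (abs_nonneg _).trans (Chebyshev.abs_iterate_derivative_T_real_le d k (abs_le.mpr hx))
  rw [markovConst_eq_eval_iterate_derivative_T, mul_comm, ← abs_of_nonneg hT]
  cases k with
  | zero => simpa using hM x hx
  | succ k =>
    exact abs_eval_iterate_derivative_le_of_node hp (fun _ _ => hM _ Chebyshev.node_mem_Icc) k
      (abs_le.mpr hx)
end

section
/- Let d ∈ ℕ, let 0 < a < b be real numbers, let ε > 0, and let p ∈ ℝ[X] be a polynomial of degree at most d such that |p(x)| ≤ ε for all x ∈ [a,b]. Then for every x ∈ [0,a], |p(x)| ≤ ε · ∑_{k=0}^{d} (2/(b−a))^k · a^k · C_M(d,k) / k!, where C_M(d,k) = (∏_{j=0}^{k−1} (d² − j²)) / (∏_{j=0}^{k−1} (2j+1)). -/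
/-!
Among the polynomials of degree at most `d` bounded by `1` on `[-1, 1]`, the Chebyshev polynomial
`T_d` has the largest derivatives at `1`, and `T_d^{(k)}(1) = C_M(d, k)`. Rescaling bounds
`p^{(k)}` at an endpoint `a` of any interval on which `p` is small, and the Taylor expansion
of `p` around `a` turns these bounds into a bound on `p` away from the interval.
-/

section

open Polynomial

theorem eval_eq_sum_iterate_derivative_div_factorial {K : Type*} [Field K] [CharZero K]
    {p : K[X]} {d : ℕ} (hp : p.natDegree ≤ d) (a x : K) :
    p.eval x =
      ∑ k ∈ Finset.range (d + 1), (derivative^[k] p).eval a * (x - a) ^ k / (k.factorial : K) := by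
  have hcoeff (k : ℕ) :
      (taylor a p).coeff k = (derivative^[k] p).eval a / (k.factorial : K) := by
    have hk : (k.factorial : K) ≠ 0 := mod_cast k.factorial_ne_zero
    rw [taylor_coeff, eq_div_iff hk, ← factorial_smul_hasseDeriv]
    simp [mul_comm]
  rw [← taylor_eval_sub a, eval_eq_sum_range' (n := d + 1) (by rw [natDegree_taylor]; lia)]
  exact Finset.sum_congr rfl fun k _ ↦ by rw [hcoeff, div_mul_eq_mul_div]

theorem iterate_derivative_comp_C_mul_X_add_C {R : Type*} [CommSemiring R]
    (p : R[X]) (a b : R) (k : ℕ) :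
    derivative^[k] (p.comp (C a * X + C b)) =
      C (a ^ k) * (derivative^[k] p).comp (C a * X + C b) := by
  induction k with
  | zero => simp
  | succ k ih =>
    simp only [Function.iterate_succ_apply', ih, derivative_C_mul, derivative_comp,
      derivative_add, derivative_X, derivative_C, mul_one, add_zero, pow_succ, C_mul, mul_assoc]

theorem iterate_derivative_T_eval_one_eq_markovConst (d k : ℕ) :
    (derivative^[k] (Chebyshev.T ℝ d)).eval 1 = markovConst d k := by
  simpa [markovConst] using Chebyshev.iterate_derivative_T_eval_one_eq_div (𝔽 := ℝ) d k

theorem abs_iterate_derivative_eval_one_le_markovConst {p : ℝ[X]} {d : ℕ} (hp : p.natDegree ≤ d)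
    (hbound : ∀ x ∈ Set.Icc (-1) 1, |p.eval x| ≤ 1) (k : ℕ) :
    |(derivative^[k] p).eval 1| ≤ markovConst d k := by
  have extremal {q : ℝ[X]} (hq : q.natDegree ≤ d)
      (hq_bound : ∀ x ∈ Set.Icc (-1) 1, |q.eval x| ≤ 1) :
      (derivative^[k] q).eval 1 ≤ markovConst d k := by
    rw [← iterate_derivative_T_eval_one_eq_markovConst]
    exact Chebyshev.eval_iterate_derivative_le_of_forall_abs_le_one le_rfl
      (degree_le_of_natDegree_le hq) hq_bound
  refine abs_le'.2 ⟨extremal hp hbound, ?_⟩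
  simpa only [iterate_derivative_neg, eval_neg] using
    extremal (q := -p) (by rwa [natDegree_neg]) (by simpa only [eval_neg, abs_neg] using hbound)

theorem abs_iterate_derivative_eval_one_le_mul_markovConst {p : ℝ[X]} {d : ℕ}
    (hp : p.natDegree ≤ d) {M : ℝ} (hbound : ∀ x ∈ Set.Icc (-1) 1, |p.eval x| ≤ M) (k : ℕ) :
    |(derivative^[k] p).eval 1| ≤ M * markovConst d k := by
  have hM : 0 ≤ M := (abs_nonneg _).trans (hbound 1 (by norm_num))
  rcases hM.eq_or_lt with rfl | hM
  · have hp_zero : p = 0 := eq_zero_of_infinite_isRoot p <|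
      (Set.Icc_infinite (by norm_num)).mono fun x hx ↦ abs_nonpos_iff.1 (hbound x hx)
    simp [hp_zero]
  · have hscaled := abs_iterate_derivative_eval_one_le_markovConst (p := C M⁻¹ * p)
      ((natDegree_C_mul_le _ _).trans hp) (fun x hx ↦ by
        rw [eval_C_mul, abs_mul, abs_of_pos (inv_pos.2 hM), inv_mul_le_iff₀ hM, mul_one]
        exact hbound x hx) k
    rwa [iterate_derivative_C_mul, eval_C_mul, abs_mul, abs_of_pos (inv_pos.2 hM),
      inv_mul_le_iff₀ hM] at hscaled

theorem abs_iterate_derivative_eval_left_le_mul_markovConst {p : ℝ[X]} {d : ℕ}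
    (hp : p.natDegree ≤ d) {a b M : ℝ} (hab : a ≠ b)
    (hbound : ∀ x ∈ Set.uIcc a b, |p.eval x| ≤ M) (k : ℕ) :
    |(derivative^[k] p).eval a| ≤ (2 / |b - a|) ^ k * (M * markovConst d k) := by
  -- `φ` sends `1` to `a` and `-1` to `b`.
  let φ : ℝ[X] := C ((a - b) / 2) * X + C ((a + b) / 2)
  have hφ (y : ℝ) : φ.eval y = (a - b) / 2 * y + (a + b) / 2 := by simp [φ]
  have hφ_mem {y : ℝ} (hy : y ∈ Set.Icc (-1) 1) : φ.eval y ∈ Set.uIcc a b := by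
    rw [hφ, Set.mem_uIcc]
    rcases le_total a b with h | h
    · exact .inl ⟨by nlinarith [hy.1, hy.2], by nlinarith [hy.1, hy.2]⟩
    · exact .inr ⟨by nlinarith [hy.1, hy.2], by nlinarith [hy.1, hy.2]⟩
  have hφ_one : φ.eval 1 = a := by rw [hφ]; ring
  have hcomp_degree : (p.comp φ).natDegree ≤ d := calc
    (p.comp φ).natDegree ≤ p.natDegree * 1 := by
      grw [natDegree_comp_le, natDegree_linear_le]
    _ ≤ d := by rwa [mul_one]
  have hmarkov := abs_iterate_derivative_eval_one_le_mul_markovConst hcomp_degree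
    (fun y hy ↦ by rw [eval_comp]; exact hbound _ (hφ_mem hy)) k
  have hscale : 2 / |b - a| = |(a - b) / 2|⁻¹ := by
    rw [abs_div, abs_two, inv_div, abs_sub_comm]
  have hpos : 0 < |(a - b) / 2| ^ k := by
    have := sub_ne_zero.2 hab
    positivity
  rwa [iterate_derivative_comp_C_mul_X_add_C, eval_C_mul, eval_comp, hφ_one, abs_mul, abs_pow,
    ← le_inv_mul_iff₀ hpos, ← inv_pow, ← hscale] at hmarkov

theorem small_on_interval_extrapolation_general {p : ℝ[X]} {d : ℕ} (hp : p.natDegree ≤ d)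
    {a b ε : ℝ} (hab : a ≠ b) (hsmall : ∀ x ∈ Set.uIcc a b, |p.eval x| ≤ ε)
    {r x : ℝ} (hx : |x - a| ≤ r) :
    |p.eval x| ≤ ε * ∑ k ∈ Finset.range (d + 1),
      (2 / |b - a|) ^ k * r ^ k * markovConst d k / (k.factorial : ℝ) := by
  calc |p.eval x|
    _ ≤ ∑ k ∈ Finset.range (d + 1),
          |(derivative^[k] p).eval a * (x - a) ^ k / (k.factorial : ℝ)| := by
      rw [eval_eq_sum_iterate_derivative_div_factorial hp a x]
      exact Finset.abs_sum_le_sum_abs _ _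
    _ ≤ ∑ k ∈ Finset.range (d + 1),
          (2 / |b - a|) ^ k * (ε * markovConst d k) * r ^ k / (k.factorial : ℝ) := by
      refine Finset.sum_le_sum fun k _ ↦ ?_
      rw [abs_div, abs_mul, abs_pow, Nat.abs_cast]
      have hderiv := abs_iterate_derivative_eval_left_le_mul_markovConst hp hab hsmall k
      gcongr
      exact (abs_nonneg _).trans hderiv
    _ = ε * ∑ k ∈ Finset.range (d + 1),
          (2 / |b - a|) ^ k * r ^ k * markovConst d k / (k.factorial : ℝ) := by
      rw [Finset.mul_sum]
      exact Finset.sum_congr rfl fun k _ ↦ by ring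

end

/-- A polynomial that is small on `[a,b]` stays controlled on `[0,a]`. -/
theorem small_on_interval_extrapolation (d : ℕ) (a b : ℝ) (ha : 0 < a) (hab : a < b)
    (ε : ℝ) (hε : 0 < ε) (p : Polynomial ℝ) (hp : p.natDegree ≤ d)
    (hsmall : ∀ x ∈ Set.Icc a b, |p.eval x| ≤ ε) :
    ∀ x ∈ Set.Icc (0 : ℝ) a,
      |p.eval x| ≤ ε * ∑ k ∈ Finset.range (d + 1),
        (2 / (b - a)) ^ k * a ^ k * markovConst d k / (Nat.factorial k) := by
  intro x hx
  simpa only [abs_of_pos (sub_pos.2 hab)] using small_on_interval_extrapolation_general hp hab.ne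
    (by rwa [Set.uIcc_of_le hab.le]) (abs_le.2 ⟨by linarith [hx.1], by linarith [hx.2]⟩)
end

section
/- Consider the two-qubit Lindblad generator with Hamiltonian H = ∑_{α∈Fin 3} a¹(α)·(σ(α) ⊗ 1) + ∑_{α∈Fin 3} a²(α)·(1 ⊗ σ(α)) + ∑_{α₁,α₂∈Fin 3} c(α₁,α₂)·(σ(α₁) ⊗ σ(α₂)), where a¹, a² : Fin 3 → ℝ and c : Fin 3 → Fin 3 → ℝ, and single-qubit dissipators with arbitrary coefficient matrices D¹, D² : Fin 3 → Fin 3 → ℂ. Let ρ₀ = ρ(τ₁) ⊗ ρ(τ₂), and define 𝒟(ρ₀) = ∑_{μ,ν} D¹(μ,ν)·( (σ(μ)⊗1)·ρ₀·(σ(ν)⊗1) − (1/2)·((σ(ν)·σ(μ))⊗1)·ρ₀ − (1/2)·ρ₀·((σ(ν)·σ(μ))⊗1) ) + ∑_{μ,ν} D²(μ,ν)·( (1⊗σ(μ))·ρ₀·(1⊗σ(ν)) − (1/2)·(1⊗(σ(ν)·σ(μ)))·ρ₀ − (1/2)·ρ₀·(1⊗(σ(ν)·σ(μ))) ). Then for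 all γ, η ∈ Fin 3 with τ₁ ≠ γ and τ₂ ≠ η: tr( ( −i·(H·ρ₀ − ρ₀·H) + 𝒟(ρ₀) ) · (σ(γ) ⊗ σ(η)) ) = 2 · ∑_{α₁,α₂∈Fin 3} c(α₁,α₂) · ( ε(α₁,τ₁,γ)·δ(α₂,η) + ε(α₂,τ₂,η)·δ(α₁,γ) ). In particular, all single-qubit Hamiltonian coefficients and all dissipative coefficients drop out, isolating the two-qubit couplings c. -/
open Matrix
open scoped Kronecker

/-- The Pauli matrices. -/
noncomputable def pauli : Fin 3 → Matrix (Fin 2) (Fin 2) ℂ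
  | 0 => !![0, 1; 1, 0]
  | 1 => !![0, -Complex.I; Complex.I, 0]
  | 2 => !![1, 0; 0, -1]

/-- The Levi-Civita symbol on three indices in `Fin 3`. -/
def levi (i j k : Fin 3) : ℝ :=
  if (i.val, j.val, k.val) = (0, 1, 2) ∨ (i.val, j.val, k.val) = (1, 2, 0) ∨
      (i.val, j.val, k.val) = (2, 0, 1) then 1
  else if (i.val, j.val, k.val) = (0, 2, 1) ∨ (i.val, j.val, k.val) = (2, 1, 0) ∨
      (i.val, j.val, k.val) = (1, 0, 2) then -1
  else 0

/-- The Kronecker delta. -/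
def kdelta (i j : Fin 3) : ℝ := if i = j then 1 else 0

/-- The density matrix `(1 + σ τ)/2` of the `+1` eigenstate of the Pauli matrix `σ τ`. -/
noncomputable def plusState (τ : Fin 3) : Matrix (Fin 2) (Fin 2) ℂ :=
  (1 / 2 : ℂ) • (1 + pauli τ)

/-!
A generator acting on a single tensor factor leaves the other factor of a product state
`ρ ⊗ₖ σ` untouched, so its contribution to the expectation of `A ⊗ₖ B` contains the factor
`tr (ρ A)` or `tr (σ B)`. Both vanish when `ρ` and `σ` are polarized along Pauli axes other than
the measured ones, and only the interaction survives. Its commutator splits into a commutator on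
one factor and an anticommutator on the other; for Pauli matrices these produce the Levi-Civita
and the Kronecker symbol, respectively.
-/

attribute [local instance] LieRing.ofAssociativeRing

section KroneckerLinearity

variable {l m n p R : Type*}

lemma sub_kronecker [NonUnitalNonAssocRing R] (A₁ A₂ : Matrix l m R) (B : Matrix n p R) :
    (A₁ - A₂) ⊗ₖ B = A₁ ⊗ₖ B - A₂ ⊗ₖ B := by
  ext
  exact sub_mul _ _ _

lemma kronecker_sub [NonUnitalNonAssocRing R] (A : Matrix l m R) (B₁ B₂ : Matrix n p R) :
    A ⊗ₖ (B₁ - B₂) = A ⊗ₖ B₁ - A ⊗ₖ B₂ := by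
  ext
  exact mul_sub _ _ _

variable {ι : Type*} [NonUnitalNonAssocSemiring R]

lemma sum_kronecker (s : Finset ι) (A : ι → Matrix l m R) (B : Matrix n p R) :
    (∑ i ∈ s, A i) ⊗ₖ B = ∑ i ∈ s, A i ⊗ₖ B := by
  ext
  simp only [kroneckerMap_apply, Matrix.sum_apply, Finset.sum_mul]

lemma kronecker_sum (s : Finset ι) (A : Matrix l m R) (B : ι → Matrix n p R) :
    A ⊗ₖ (∑ i ∈ s, B i) = ∑ i ∈ s, A ⊗ₖ B i := by
  ext
  simp only [kroneckerMap_apply, Matrix.sum_apply, Finset.mul_sum]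

end KroneckerLinearity

section LocalOperators

variable {m n R : Type*} [Fintype m] [Fintype n]

lemma two_smul_lie_kronecker [CommRing R] (A ρ : Matrix m m R) (B σ : Matrix n n R) :
    (2 : R) • ⁅A ⊗ₖ B, ρ ⊗ₖ σ⁆ = ⁅A, ρ⁆ ⊗ₖ (B * σ + σ * B) + (A * ρ + ρ * A) ⊗ₖ ⁅B, σ⁆ := by
  simp only [Ring.lie_def, ← mul_kronecker_mul, sub_kronecker, kronecker_sub, add_kronecker,
    kronecker_add]
  module

lemma lie_kronecker_one [CommRing R] [DecidableEq n] (A ρ : Matrix m m R) (σ : Matrix n n R) :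
    ⁅A ⊗ₖ (1 : Matrix n n R), ρ ⊗ₖ σ⁆ = ⁅A, ρ⁆ ⊗ₖ σ := by
  simp only [Ring.lie_def, ← mul_kronecker_mul, one_mul, mul_one, sub_kronecker]

lemma lie_one_kronecker [CommRing R] [DecidableEq m] (ρ : Matrix m m R) (B σ : Matrix n n R) :
    ⁅(1 : Matrix m m R) ⊗ₖ B, ρ ⊗ₖ σ⁆ = ρ ⊗ₖ ⁅B, σ⁆ := by
  simp only [Ring.lie_def, ← mul_kronecker_mul, one_mul, mul_one, kronecker_sub]

variable {ι κ : Type*} [Fintype ι] [Fintype κ]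

/-- The Gorini–Kossakowski–Sudarshan–Lindblad dissipator with jump operators `L` and an
arbitrary coefficient matrix `D`; the index `ν` is the one carried by the adjoint. -/
noncomputable def dissipator (D : ι → ι → ℂ) (L : ι → Matrix n n ℂ) (ρ : Matrix n n ℂ) :
    Matrix n n ℂ :=
  ∑ μ, ∑ ν, D μ ν • (L μ * ρ * (L ν)ᴴ - (1 / 2 : ℂ) • ((L ν)ᴴ * L μ * ρ) -
    (1 / 2 : ℂ) • (ρ * ((L ν)ᴴ * L μ)))

lemma dissipator_kronecker_one [DecidableEq n] (D : ι → ι → ℂ) (L : ι → Matrix m m ℂ)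
    (ρ : Matrix m m ℂ) (σ : Matrix n n ℂ) :
    dissipator D (fun μ ↦ L μ ⊗ₖ (1 : Matrix n n ℂ)) (ρ ⊗ₖ σ) = dissipator D L ρ ⊗ₖ σ := by
  simp only [dissipator, conjTranspose_kronecker, conjTranspose_one, ← mul_kronecker_mul, one_mul,
    mul_one, smul_kronecker, sub_kronecker, sum_kronecker]

lemma dissipator_one_kronecker [DecidableEq m] (D : ι → ι → ℂ) (L : ι → Matrix n n ℂ)
    (ρ : Matrix m m ℂ) (σ : Matrix n n ℂ) :
    dissipator D (fun μ ↦ (1 : Matrix m m ℂ) ⊗ₖ L μ) (ρ ⊗ₖ σ) = ρ ⊗ₖ dissipator D L σ := by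
  simp only [dissipator, conjTranspose_kronecker, conjTranspose_one, ← mul_kronecker_mul, one_mul,
    mul_one, kronecker_smul, kronecker_sub, kronecker_sum]

theorem trace_lindblad_mul_kronecker_eq_trace_interaction [DecidableEq m] [DecidableEq n]
    (H₁ : Matrix m m ℂ) (H₂ : Matrix n n ℂ) (V : Matrix (m × n) (m × n) ℂ)
    (D₁ : ι → ι → ℂ) (L₁ : ι → Matrix m m ℂ) (D₂ : κ → κ → ℂ) (L₂ : κ → Matrix n n ℂ)
    {ρ A : Matrix m m ℂ} {σ B : Matrix n n ℂ} (hA : trace (ρ * A) = 0) (hB : trace (σ * B) = 0) :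
    trace ((-Complex.I • ⁅H₁ ⊗ₖ 1 + 1 ⊗ₖ H₂ + V, ρ ⊗ₖ σ⁆ +
        (dissipator D₁ (fun μ ↦ L₁ μ ⊗ₖ 1) (ρ ⊗ₖ σ) +
          dissipator D₂ (fun μ ↦ 1 ⊗ₖ L₂ μ) (ρ ⊗ₖ σ))) * (A ⊗ₖ B)) =
      -Complex.I * trace (⁅V, ρ ⊗ₖ σ⁆ * (A ⊗ₖ B)) := by
  have left_factor (X : Matrix m m ℂ) : trace (X ⊗ₖ σ * (A ⊗ₖ B)) = 0 := by
    rw [← mul_kronecker_mul, trace_kronecker, hB, mul_zero]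
  have right_factor (Y : Matrix n n ℂ) : trace (ρ ⊗ₖ Y * (A ⊗ₖ B)) = 0 := by
    rw [← mul_kronecker_mul, trace_kronecker, hA, zero_mul]
  simp only [add_lie, lie_kronecker_one, lie_one_kronecker, dissipator_kronecker_one,
    dissipator_one_kronecker, add_mul, smul_mul_assoc, trace_add, trace_smul, left_factor,
    right_factor, smul_eq_mul, zero_add, add_zero]

end LocalOperators

section Pauli

lemma kdelta_comm (i j : Fin 3) : kdelta i j = kdelta j i := by
  simp only [kdelta, eq_comm]

lemma levi_swap_left (i j k : Fin 3) : levi j i k = -levi i j k := by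
  fin_cases i <;> fin_cases j <;> fin_cases k <;> simp [levi]

lemma conjTranspose_pauli (α : Fin 3) : (pauli α)ᴴ = pauli α := by
  fin_cases α <;> ext i j <;> fin_cases i <;> fin_cases j <;> simp [pauli]

lemma trace_pauli (α : Fin 3) : trace (pauli α) = 0 := by
  fin_cases α <;> simp [pauli, trace_fin_two]

lemma pauli_mul_pauli (α β : Fin 3) :
    pauli α * pauli β =
      (kdelta α β : ℂ) • (1 : Matrix (Fin 2) (Fin 2) ℂ) +
        Complex.I • ∑ k, (levi α β k : ℂ) • pauli k := by
  fin_cases α <;> fin_cases β <;> ext i j <;> fin_cases i <;> fin_cases j <;>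
    simp [pauli, kdelta, levi, Fin.sum_univ_three]

lemma lie_pauli_pauli (α β : Fin 3) :
    ⁅pauli α, pauli β⁆ = (2 * Complex.I) • ∑ k, (levi α β k : ℂ) • pauli k := by
  rw [Ring.lie_def, pauli_mul_pauli, pauli_mul_pauli, kdelta_comm β α]
  simp only [levi_swap_left α β, Complex.ofReal_neg, neg_smul, Finset.sum_neg_distrib]
  module

lemma pauli_mul_pauli_add_swap (α β : Fin 3) :
    pauli α * pauli β + pauli β * pauli α =
      (2 * kdelta α β : ℂ) • (1 : Matrix (Fin 2) (Fin 2) ℂ) := by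
  rw [pauli_mul_pauli, pauli_mul_pauli, kdelta_comm β α]
  simp only [levi_swap_left α β, Complex.ofReal_neg, neg_smul, Finset.sum_neg_distrib]
  module

lemma trace_pauli_mul_pauli (α β : Fin 3) : trace (pauli α * pauli β) = 2 * kdelta α β := by
  simp [pauli_mul_pauli, trace_sum, trace_pauli, mul_comm]

lemma trace_plusState_mul_pauli (τ γ : Fin 3) : trace (plusState τ * pauli γ) = kdelta τ γ := by
  simp [plusState, add_mul, trace_pauli, trace_pauli_mul_pauli]

lemma lie_pauli_plusState (α τ : Fin 3) :
    ⁅pauli α, plusState τ⁆ = Complex.I • ∑ k, (levi α τ k : ℂ) • pauli k := by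
  have lie_one : ⁅pauli α, (1 : Matrix (Fin 2) (Fin 2) ℂ)⁆ = 0 := by
    rw [Ring.lie_def, mul_one, one_mul, sub_self]
  rw [plusState, lie_smul, lie_add, lie_one, lie_pauli_pauli]
  module

lemma pauli_mul_plusState_add_swap (α τ : Fin 3) :
    pauli α * plusState τ + plusState τ * pauli α =
      pauli α + (kdelta α τ : ℂ) • (1 : Matrix (Fin 2) (Fin 2) ℂ) := by
  calc pauli α * plusState τ + plusState τ * pauli α
      = pauli α + (1 / 2 : ℂ) • (pauli α * pauli τ + pauli τ * pauli α) := by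
        simp only [plusState, mul_smul_comm, smul_mul_assoc, mul_add, add_mul, mul_one, one_mul]
        module
    _ = _ := by
        rw [pauli_mul_pauli_add_swap]
        module

lemma trace_lie_pauli_plusState_mul_pauli (α τ γ : Fin 3) :
    trace (⁅pauli α, plusState τ⁆ * pauli γ) = 2 * Complex.I * levi α τ γ := by
  simp only [lie_pauli_plusState, Finset.sum_mul, smul_mul_assoc, trace_smul, trace_sum,
    trace_pauli_mul_pauli, smul_eq_mul, kdelta, apply_ite Complex.ofReal, Complex.ofReal_one,
    Complex.ofReal_zero, mul_ite, mul_one, mul_zero, Finset.sum_ite_eq', Finset.mem_univ, if_true]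
  ring

lemma trace_pauli_plusState_add_swap_mul_pauli (α τ γ : Fin 3) :
    trace ((pauli α * plusState τ + plusState τ * pauli α) * pauli γ) = 2 * kdelta α γ := by
  simp [pauli_mul_plusState_add_swap, add_mul, trace_pauli_mul_pauli, trace_pauli]

lemma trace_lie_pauli_kronecker_plusState_mul_pauli (α β τ₁ τ₂ γ η : Fin 3) :
    trace (⁅pauli α ⊗ₖ pauli β, plusState τ₁ ⊗ₖ plusState τ₂⁆ * (pauli γ ⊗ₖ pauli η)) =
      2 * Complex.I * (levi α τ₁ γ * kdelta β η + levi β τ₂ η * kdelta α γ) := by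
  have doubled := congrArg (fun X ↦ trace (X * (pauli γ ⊗ₖ pauli η)))
    (two_smul_lie_kronecker (pauli α) (plusState τ₁) (pauli β) (plusState τ₂))
  simp only [smul_mul_assoc, add_mul _ _ (pauli γ ⊗ₖ pauli η), ← mul_kronecker_mul, trace_smul,
    trace_add, trace_kronecker, trace_lie_pauli_plusState_mul_pauli,
    trace_pauli_plusState_add_swap_mul_pauli, smul_eq_mul] at doubled
  linear_combination doubled / 2

end Pauli

theorem isolate_two_qubit_couplings_general {ι κ : Type*} [Fintype ι] [Fintype κ]
    (H₁ H₂ : Matrix (Fin 2) (Fin 2) ℂ) (c : Fin 3 → Fin 3 → ℂ)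
    (D₁ : ι → ι → ℂ) (L₁ : ι → Matrix (Fin 2) (Fin 2) ℂ)
    (D₂ : κ → κ → ℂ) (L₂ : κ → Matrix (Fin 2) (Fin 2) ℂ)
    {τ₁ τ₂ γ η : Fin 3} (h₁ : τ₁ ≠ γ) (h₂ : τ₂ ≠ η) :
    let ρ₀ := plusState τ₁ ⊗ₖ plusState τ₂
    trace ((-Complex.I • ⁅H₁ ⊗ₖ 1 + 1 ⊗ₖ H₂ + ∑ α₁, ∑ α₂, c α₁ α₂ • (pauli α₁ ⊗ₖ pauli α₂), ρ₀⁆ +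
        (dissipator D₁ (fun μ ↦ L₁ μ ⊗ₖ 1) ρ₀ + dissipator D₂ (fun μ ↦ 1 ⊗ₖ L₂ μ) ρ₀)) *
          (pauli γ ⊗ₖ pauli η)) =
      2 * ∑ α₁, ∑ α₂,
        c α₁ α₂ * (levi α₁ τ₁ γ * kdelta α₂ η + levi α₂ τ₂ η * kdelta α₁ γ) := by
  have unpolarized {τ γ : Fin 3} (h : τ ≠ γ) : trace (plusState τ * pauli γ) = 0 := by
    rw [trace_plusState_mul_pauli, kdelta, if_neg h, Complex.ofReal_zero]
  intro ρ₀
  rw [trace_lindblad_mul_kronecker_eq_trace_interaction _ _ _ _ _ _ _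
    (unpolarized h₁) (unpolarized h₂)]
  simp only [sum_lie, smul_lie, Finset.sum_mul, smul_mul_assoc, trace_sum, trace_smul,
    trace_lie_pauli_kronecker_plusState_mul_pauli, smul_eq_mul, Finset.mul_sum]
  refine Finset.sum_congr rfl fun α₁ _ ↦ Finset.sum_congr rfl fun α₂ _ ↦ ?_
  linear_combination (-2 * c α₁ α₂ *
    (levi α₁ τ₁ γ * kdelta α₂ η + levi α₂ τ₂ η * kdelta α₁ γ)) * Complex.I_sq

/-- Choosing the initial product Pauli state with `τ₁ ≠ γ`, `τ₂ ≠ η` and measuring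
`σ γ ⊗ σ η` isolates the two-qubit Hamiltonian couplings in the Lindblad Master equation. -/
theorem isolate_two_qubit_couplings
    (a₁ a₂ : Fin 3 → ℝ) (c : Fin 3 → Fin 3 → ℝ) (D₁ D₂ : Fin 3 → Fin 3 → ℂ)
    (τ₁ τ₂ γ η : Fin 3) (h₁ : τ₁ ≠ γ) (h₂ : τ₂ ≠ η) :
    let H : Matrix (Fin 2 × Fin 2) (Fin 2 × Fin 2) ℂ :=
      (∑ α : Fin 3, (a₁ α : ℂ) • (pauli α ⊗ₖ (1 : Matrix (Fin 2) (Fin 2) ℂ))) +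
      (∑ α : Fin 3, (a₂ α : ℂ) • ((1 : Matrix (Fin 2) (Fin 2) ℂ) ⊗ₖ pauli α)) +
      ∑ α₁ : Fin 3, ∑ α₂ : Fin 3, (c α₁ α₂ : ℂ) • (pauli α₁ ⊗ₖ pauli α₂)
    let ρ₀ : Matrix (Fin 2 × Fin 2) (Fin 2 × Fin 2) ℂ := plusState τ₁ ⊗ₖ plusState τ₂
    let Diss : Matrix (Fin 2 × Fin 2) (Fin 2 × Fin 2) ℂ :=
      (∑ μ : Fin 3, ∑ ν : Fin 3, D₁ μ ν •
        ((pauli μ ⊗ₖ (1 : Matrix (Fin 2) (Fin 2) ℂ)) * ρ₀ *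
            (pauli ν ⊗ₖ (1 : Matrix (Fin 2) (Fin 2) ℂ)) -
          (1 / 2 : ℂ) • (((pauli ν * pauli μ) ⊗ₖ (1 : Matrix (Fin 2) (Fin 2) ℂ)) * ρ₀) -
          (1 / 2 : ℂ) • (ρ₀ * ((pauli ν * pauli μ) ⊗ₖ (1 : Matrix (Fin 2) (Fin 2) ℂ))))) +
      ∑ μ : Fin 3, ∑ ν : Fin 3, D₂ μ ν •
        (((1 : Matrix (Fin 2) (Fin 2) ℂ) ⊗ₖ pauli μ) * ρ₀ *
            ((1 : Matrix (Fin 2) (Fin 2) ℂ) ⊗ₖ pauli ν) -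
          (1 / 2 : ℂ) • (((1 : Matrix (Fin 2) (Fin 2) ℂ) ⊗ₖ (pauli ν * pauli μ)) * ρ₀) -
          (1 / 2 : ℂ) • (ρ₀ * ((1 : Matrix (Fin 2) (Fin 2) ℂ) ⊗ₖ (pauli ν * pauli μ))))
    Matrix.trace (((-Complex.I) • (H * ρ₀ - ρ₀ * H) + Diss) * (pauli γ ⊗ₖ pauli η)) =
      ((2 * ∑ α₁ : Fin 3, ∑ α₂ : Fin 3,
          c α₁ α₂ * (levi α₁ τ₁ γ * kdelta α₂ η + levi α₂ τ₂ η * kdelta α₁ γ) : ℝ) : ℂ) := by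
  intro H ρ₀ Diss
  have hamiltonian : H = (∑ α, (a₁ α : ℂ) • pauli α) ⊗ₖ 1 + 1 ⊗ₖ (∑ α, (a₂ α : ℂ) • pauli α) +
      ∑ α₁, ∑ α₂, (c α₁ α₂ : ℂ) • (pauli α₁ ⊗ₖ pauli α₂) := by
    simp only [H, sum_kronecker, kronecker_sum, smul_kronecker, kronecker_smul]
  have dissipation : Diss = dissipator D₁ (fun μ ↦ pauli μ ⊗ₖ 1) ρ₀ +
      dissipator D₂ (fun μ ↦ 1 ⊗ₖ pauli μ) ρ₀ := by
    simp only [Diss, dissipator, conjTranspose_kronecker, conjTranspose_one, conjTranspose_pauli,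
      ← mul_kronecker_mul, one_mul]
  rw [hamiltonian, dissipation, ← Ring.lie_def]
  push_cast
  exact isolate_two_qubit_couplings_general _ _ (fun α₁ α₂ ↦ c α₁ α₂) D₁ pauli D₂ pauli h₁ h₂
end
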